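/- For every integer r ≥ 1, the ℤ-subalgebra of ℚ(x_1,…,x_r) generated by all generalized cluster variables {X(l,n) : 1 ≤ l ≤ r, n ∈ ℕ} is equal to the ℤ-subalgebra generated by the finitely many generalized cluster variables {X(l,n) : 1 ≤ l ≤ r, 0 ≤ n ≤ r-1} attached to the exceptional indecomposable representations. (In the paper's notation: the algebra 𝒜ℋ generated by all X_M, M a nilpotent representation of the cyclic quiver, coincides with the cluster algebra ℰℋ generated by the X_M with M rigid, since X of a direct sum is the product of the X's of its indecomposable summands and the rigid indecomposables are exactly the E_l[n] with n ≤ r-1.) -/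

import Mathlib

/-- The ambient field `ℚ(x_1, …, x_r)`, realized as the fraction field of the
polynomial ring over `ℚ` in variables indexed by `ZMod r` (so indices are
automatically read modulo `r`). -/
noncomputable abbrev CyclicField (r : ℕ) : Type :=
  FractionRing (MvPolynomial (ZMod r) ℚ)

/-- The variable `x_i` for `i : ℤ`, with `x_{i+r} = x_i`. -/
noncomputable def xv (r : ℕ) (i : ℤ) : CyclicField r :=
  algebraMap (MvPolynomial (ZMod r) ℚ) (CyclicField r) (MvPolynomial.X (i : ZMod r))

/-- The generalized cluster variable `X(l, n)` (the image of the indecomposable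
nilpotent representation `E_l[n]` under the Caldero–Chapoton map):
`X(l,0) = 1` and, for `n ≥ 1`,
`X(l,n) = x_{l+n}/x_l + Σ_{k=1}^{n-1} (x_{l+n}·x_{l+r-1})/(x_{l+k-1}·x_{l+k}) + x_{l+r-1}/x_{l+n-1}`. -/
noncomputable def Xgcv (r : ℕ) (l : ℤ) : ℕ → CyclicField r
  | 0 => 1
  | n + 1 =>
      xv r (l + n + 1) / xv r l
        + ∑ k ∈ Finset.Icc 1 n,
            (xv r (l + n + 1) * xv r (l + r - 1)) / (xv r (l + k - 1) * xv r (l + k))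
        + xv r (l + r - 1) / xv r (l + n)

lemma xv_ne (r : ℕ) (i : ℤ) : xv r i ≠ 0 := by
  unfold xv
  intro h
  rw [FaithfulSMul.algebraMap_eq_zero_iff] at h
  exact MvPolynomial.X_ne_zero _ h

lemma xv_congr (r : ℕ) {i j : ℤ} (h : (i : ZMod r) = (j : ZMod r)) : xv r i = xv r j := by
  unfold xv
  rw [h]

/-- closed formula -/
lemma Xgcv_closed (r : ℕ) (l : ℤ) (n : ℕ) :
    Xgcv r l n = xv r (l + n) * xv r (l - 1) *
      ∑ k ∈ Finset.range (n + 1), 1 / (xv r (l + k - 1) * xv r (l + k)) := by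
  have hp : xv r (l + r - 1) = xv r (l - 1) := xv_congr r (by push_cast; simp)
  cases n with
  | zero =>
    have h1 := xv_ne r l
    have h2 := xv_ne r (l - 1)
    simp [Xgcv]
    field_simp
  | succ n =>
    have h1 := xv_ne r l
    have h2 := xv_ne r (l - 1)
    have h3 := xv_ne r (l + n)
    have h4 := xv_ne r (l + n + 1)
    rw [Finset.sum_range_succ, Finset.range_eq_Ico, Finset.sum_eq_sum_Ico_succ_bot (by omega)]
    have : Finset.Ico (0 + 1) (n + 1) = Finset.Icc 1 n := by
      ext; simp
    rw [this, Xgcv, hp, mul_add, mul_add, Finset.mul_sum]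
    have e1 : l + ((n + 1 : ℕ) : ℤ) = l + n + 1 := by push_cast; ring
    have e2 : l + (n : ℤ) + 1 - 1 = l + n := by ring
    rw [e1, e2]
    congr 1
    · congr 1
      · simp
        field_simp
      · refine Finset.sum_congr rfl fun k _ => ?_
        rw [mul_one_div]
    · field_simp

lemma Xgcv_one (r : ℕ) (l : ℤ) :
    Xgcv r l 1 = (xv r (l + 1) + xv r (l - 1)) / xv r l := by
  have hp : xv r (l + r - 1) = xv r (l - 1) := xv_congr r (by push_cast; simp)
  simp [Xgcv, hp, add_div]

lemma Xgcv_rec (r : ℕ) (l : ℤ) (n : ℕ) :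
    Xgcv r l (n + 2) = Xgcv r (l + n + 1) 1 * Xgcv r l (n + 1) - Xgcv r l n := by
  rw [Xgcv_one, Xgcv_closed r l (n + 2), Xgcv_closed r l (n + 1), Xgcv_closed r l n,
    Finset.sum_range_succ _ (n + 2), Finset.sum_range_succ _ (n + 1)]
  have e1 : l + ((n + 1 : ℕ) : ℤ) = l + n + 1 := by push_cast; ring
  have e2 : l + ((n + 2 : ℕ) : ℤ) = l + n + 1 + 1 := by push_cast; ring
  have e3 : l + (n : ℤ) + 1 - 1 = l + n := by ring
  have e4 : l + (n : ℤ) + 1 + 1 - 1 = l + n + 1 := by ring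
  rw [e1, e2, e3, e4]
  have h3 := xv_ne r (l + n)
  have h4 := xv_ne r (l + n + 1)
  have h5 := xv_ne r (l + n + 1 + 1)
  generalize ∑ k ∈ Finset.range (n + 1), 1 / (xv r (l + k - 1) * xv r (l + k)) = S
  field_simp
  ring

lemma Xgcv_one_mem (r : ℕ) (hr : 1 ≤ r) (l : ℤ) :
    Xgcv r l 1 ∈ Algebra.adjoin ℤ
        {x : CyclicField r |
          ∃ (l : ℤ) (n : ℕ), 1 ≤ l ∧ l ≤ r ∧ n ≤ r - 1 ∧ x = Xgcv r l n} := by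
  rcases Nat.lt_or_ge 1 r with h | h
  · apply Algebra.subset_adjoin
    have h0 : (0 : ℤ) < r := by exact_mod_cast hr
    refine ⟨(l - 1) % r + 1, 1, ?_, ?_, by omega, ?_⟩
    · have := Int.emod_nonneg (l - 1) h0.ne'
      omega
    · have := Int.emod_lt_of_pos (l - 1) h0
      omega
    · have hc : (((l - 1) % r + 1 : ℤ) : ZMod r) = (l : ZMod r) := by
        push_cast
        ring
      rw [Xgcv_one, Xgcv_one]
      congr 1
      · congr 1
        · apply xv_congr
          rw [Int.cast_add, Int.cast_add _ 1, hc]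
        · apply xv_congr
          rw [Int.cast_sub, Int.cast_sub _ 1, hc]
      · exact xv_congr r hc.symm
  · obtain rfl : r = 1 := by omega
    have ha : ∀ i, xv 1 i = xv 1 0 := fun i => xv_congr 1 (Subsingleton.elim _ _)
    have : Xgcv 1 l 1 = 1 + 1 := by
      have := xv_ne 1 0
      rw [Xgcv_one, ha (l + 1), ha (l - 1), ha l]
      field_simp
    rw [this]
    exact add_mem (one_mem _) (one_mem _)

/-- the `ℤ`-subalgebra of `ℚ(x_1,…,x_r)` generated by all generalized
cluster variables `X(l, n)` coincides with the one generated by the `X(l, n)` with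
`n ≤ r - 1` (those attached to the rigid indecomposables). -/
theorem stmt11 (r : ℕ) (hr : 1 ≤ r) :
    Algebra.adjoin ℤ {x : CyclicField r | ∃ (l : ℤ) (n : ℕ), 1 ≤ l ∧ l ≤ r ∧ x = Xgcv r l n} =
      Algebra.adjoin ℤ
        {x : CyclicField r |
          ∃ (l : ℤ) (n : ℕ), 1 ≤ l ∧ l ≤ r ∧ n ≤ r - 1 ∧ x = Xgcv r l n} := by
  apply le_antisymm
  · apply Algebra.adjoin_le
    rintro x ⟨l, n, -, -, rfl⟩
    have key : ∀ n : ℕ, Xgcv r l n ∈ Algebra.adjoin ℤ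
        {x : CyclicField r |
          ∃ (l : ℤ) (n : ℕ), 1 ≤ l ∧ l ≤ r ∧ n ≤ r - 1 ∧ x = Xgcv r l n} ∧
        Xgcv r l (n + 1) ∈ Algebra.adjoin ℤ
        {x : CyclicField r |
          ∃ (l : ℤ) (n : ℕ), 1 ≤ l ∧ l ≤ r ∧ n ≤ r - 1 ∧ x = Xgcv r l n} := by
      intro n
      induction n with
      | zero => exact ⟨one_mem _, Xgcv_one_mem r hr l⟩
      | succ n ih =>
        refine ⟨ih.2, ?_⟩
        rw [Xgcv_rec]
        exact sub_mem (mul_mem (Xgcv_one_mem r hr _) ih.2) ih.1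
    exact (key n).1
  · apply Algebra.adjoin_mono
    rintro x ⟨l, n, h1, h2, -, rfl⟩
    exact ⟨l, n, h1, h2, rfl⟩
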